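/- Let {Qⁿ}ₙ₌₀ᴺ be the positive sequence generated by the P-DRLM1 scheme with f = 0. Then for every n = 0, 1, …, N one has Qⁿ ≤ C₀ := √(1 + (‖u⁰‖² + τ²‖∇p⁰‖²)/(2θ)) and ‖uⁿ‖ ≤ M̃ := √(‖u⁰‖² + τ²‖∇p⁰‖² + 2θ); in particular C₀ ≥ 1 and these bounds hold for every time step τ > 0. -/

import Mathlib

open MeasureTheory Real
open scoped RealInnerProductSpace

noncomputable section

/-- Euclidean space `ℝ^d`. -/
abbrev Euc (d : ℕ) := EuclideanSpace ℝ (Fin d)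

/-- Partial derivative of a scalar field in the `j`-th coordinate direction. -/
def pder {d : ℕ} (j : Fin d) (f : Euc d → ℝ) (x : Euc d) : ℝ :=
  fderiv ℝ f x (EuclideanSpace.single j 1)

/-- Gradient of a scalar field. -/
def grd {d : ℕ} (f : Euc d → ℝ) (x : Euc d) : Euc d :=
  (WithLp.equiv 2 (Fin d → ℝ)).symm fun j => pder j f x

/-- Laplacian of a scalar field. -/
def lap {d : ℕ} (f : Euc d → ℝ) (x : Euc d) : ℝ :=
  ∑ j, pder j (fun y => pder j f y) x

/-- Componentwise Laplacian of a vector field. -/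
def vlap {d : ℕ} (u : Euc d → Euc d) (x : Euc d) : Euc d :=
  (WithLp.equiv 2 (Fin d → ℝ)).symm fun i => lap (fun y => u y i) x

/-- Divergence of a vector field. -/
def divg {d : ℕ} (u : Euc d → Euc d) (x : Euc d) : ℝ :=
  ∑ j, pder j (fun y => u y j) x

/-- Convection term `(u·∇)v`. -/
def conv {d : ℕ} (u v : Euc d → Euc d) (x : Euc d) : Euc d :=
  (WithLp.equiv 2 (Fin d → ℝ)).symm fun i => ∑ j, u x j * pder j (fun y => v y i) x

/-- `L²(Ω)` inner product of vector fields. -/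
def ipL2 {d : ℕ} (Ω : Set (Euc d)) (u v : Euc d → Euc d) : ℝ :=
  ∫ x in Ω, ⟪u x, v x⟫

/-- Squared `L²(Ω)` norm of a vector field. -/
def nsq {d : ℕ} (Ω : Set (Euc d)) (u : Euc d → Euc d) : ℝ :=
  ∫ x in Ω, ‖u x‖ ^ 2

/-- Squared `L²(Ω)` norm of the gradient of a scalar field. -/
def gnsq {d : ℕ} (Ω : Set (Euc d)) (p : Euc d → ℝ) : ℝ :=
  ∫ x in Ω, ‖grd p x‖ ^ 2

/-- Squared `L²(Ω)` norm of the gradient of a vector field. -/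
def vgnsq {d : ℕ} (Ω : Set (Euc d)) (u : Euc d → Euc d) : ℝ :=
  ∫ x in Ω, ∑ i, ‖grd (fun y => u y i) x‖ ^ 2

/-- `(∇p, v)` in `L²(Ω)`. -/
def ipGrad {d : ℕ} (Ω : Set (Euc d)) (p : Euc d → ℝ) (v : Euc d → Euc d) : ℝ :=
  ∫ x in Ω, ⟪grd p x, v x⟫

/-- `(∇p, ∇q)` in `L²(Ω)`. -/
def ipGG {d : ℕ} (Ω : Set (Euc d)) (p q : Euc d → ℝ) : ℝ :=
  ∫ x in Ω, ⟪grd p x, grd q x⟫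

/-- `(∇u, ∇v)` in `L²(Ω)` for vector fields. -/
def ipVG {d : ℕ} (Ω : Set (Euc d)) (u v : Euc d → Euc d) : ℝ :=
  ∫ x in Ω, ∑ i, ⟪grd (fun y => u y i) x, grd (fun y => v y i) x⟫

/-- Trilinear form `b(u,v,w) = ∫_Ω ((u·∇)v)·w`. -/
def triB {d : ℕ} (Ω : Set (Euc d)) (u v w : Euc d → Euc d) : ℝ :=
  ∫ x in Ω, ⟪conv u v x, w x⟫

/-- Discrete energy `K(u,p) = ½(‖u‖² + τ²‖∇p‖²)`. -/
def Ke {d : ℕ} (Ω : Set (Euc d)) (τ : ℝ) (u : Euc d → Euc d) (p : Euc d → ℝ) : ℝ :=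
  (1/2) * (nsq Ω u + τ^2 * gnsq Ω p)

/-- Squared `H¹(Ω)` norm of a vector field. -/
def h1sq {d : ℕ} (Ω : Set (Euc d)) (u : Euc d → Euc d) : ℝ :=
  nsq Ω u + vgnsq Ω u

/-- Squared `H²(Ω)` norm of a vector field. -/
def h2sq {d : ℕ} (Ω : Set (Euc d)) (u : Euc d → Euc d) : ℝ :=
  h1sq Ω u + ∫ x in Ω, ∑ i, ∑ j, ∑ k,
    (pder k (fun y => pder j (fun z => u z i) y) x) ^ 2

/-- `H⁻¹(Ω)` norm, defined by duality against `H¹₀(Ω)` vector fields. -/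
def negNorm {d : ℕ} (Ω : Set (Euc d)) (f : Euc d → Euc d) : ℝ :=
  sSup {r : ℝ | ∃ v : Euc d → Euc d, (∀ x ∈ frontier Ω, v x = 0) ∧
    r = (∫ x in Ω, ⟪f x, v x⟫) / Real.sqrt (vgnsq Ω v)}

/-- One step of the first-order pressure-correction DRLM scheme (P-DRLM1):
from `(uⁿ, pⁿ, Qⁿ)` the quadruple `(ûⁿ⁺¹, uⁿ⁺¹, pⁿ⁺¹, Qⁿ⁺¹)` satisfies the
prediction step (with force `f` and no-slip boundary condition on `ûⁿ⁺¹`),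
the projection step, incompressibility (with vanishing normal trace, `nrm`
being the outward normal of `Ω`), and the dynamically regularized Lagrange
multiplier energy equation. -/
def PDRLM1 {d : ℕ} (Ω : Set (Euc d)) (ν τ θ : ℝ) (f : Euc d → Euc d)
    (u : Euc d → Euc d) (p : Euc d → ℝ) (Q : ℝ)
    (uh u' : Euc d → Euc d) (p' : Euc d → ℝ) (Q' : ℝ)
    (nrm : Euc d → Euc d) : Prop :=
  (∀ x ∈ Ω, (1/τ) • (uh x - u x) + Q' • conv u u x + grd p x - ν • vlap uh x = f x) ∧
  (∀ x ∈ frontier Ω, uh x = 0) ∧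
  (∀ x ∈ Ω, (1/τ) • (u' x - uh x) + grd (fun y => p' y - p y) x = 0) ∧
  (∀ x ∈ Ω, divg u' x = 0) ∧
  (∀ x ∈ frontier Ω, ⟪u' x, nrm x⟫ = 0) ∧
  ((Ke Ω τ u' p' - Ke Ω τ u p) / τ + θ * (Q' ^ 2 - Q ^ 2) / τ
    = ipL2 Ω (fun x => (1/τ) • (uh x - u x)) uh + Q' * triB Ω u u uh + ipGrad Ω p uh)

section

open Filter Topology

/-- The odd cutoff `s ↦ s χ(n s² - 1)`, a nondecreasing function vanishing near `0`. -/
def cutoff (n : ℕ) (s : ℝ) : ℝ := s * smoothTransition (n * s ^ 2 - 1)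

theorem contDiff_cutoff (n : ℕ) : ContDiff ℝ (⊤ : ℕ∞) (cutoff n) := by
  unfold cutoff
  exact contDiff_id.mul (smoothTransition.contDiff.comp (by fun_prop))

theorem abs_cutoff_le (n : ℕ) (s : ℝ) : |cutoff n s| ≤ |s| := by
  rw [cutoff, abs_mul, abs_of_nonneg (smoothTransition.nonneg _)]
  exact mul_le_of_le_one_right (abs_nonneg s) (smoothTransition.le_one _)

theorem cutoff_eventuallyEq_zero (n : ℕ) : cutoff n =ᶠ[𝓝 0] 0 := by
  have hc : ContinuousAt (fun s : ℝ => (n : ℝ) * s ^ 2 - 1) 0 := by fun_prop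
  have := hc.eventually_lt (continuousAt_const (y := (0 : ℝ))) (by norm_num)
  filter_upwards [this] with s hs
  simp [cutoff, smoothTransition.zero_of_nonpos hs.le]

theorem tendsto_cutoff (s : ℝ) : Tendsto (fun n => cutoff n s) atTop (𝓝 s) := by
  rcases eq_or_ne s 0 with rfl | hs
  · simp [cutoff]
  · obtain ⟨m, hm⟩ := exists_nat_ge (2 / s ^ 2)
    refine tendsto_const_nhds.congr' ?_
    filter_upwards [eventually_ge_atTop m] with n hn
    have hs2 : 0 < s ^ 2 := by positivity
    have : 2 ≤ (n : ℝ) * s ^ 2 := by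
      rw [← div_le_iff₀ hs2]
      exact hm.trans (by exact_mod_cast hn)
    rw [cutoff, smoothTransition.one_of_one_le (by linarith), mul_one]

theorem deriv_cutoff_nonneg (n : ℕ) (s : ℝ) : 0 ≤ deriv (cutoff n) s := by
  refine Monotone.deriv_nonneg (fun a b hab => ?_)
  have key : ∀ a b : ℝ, 0 ≤ a → a ≤ b → cutoff n a ≤ cutoff n b := by
    intro a b ha hab
    unfold cutoff
    refine mul_le_mul hab (smoothTransition.monotone ?_) (smoothTransition.nonneg _)
      (ha.trans hab)
    gcongr
  have odd : ∀ a : ℝ, cutoff n (-a) = -cutoff n a := by intro a; simp [cutoff]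
  have sgn : ∀ a : ℝ, 0 ≤ a → 0 ≤ cutoff n a := fun a ha =>
    mul_nonneg ha (smoothTransition.nonneg _)
  rcases le_total 0 a with ha | ha
  · exact key a b ha hab
  rcases le_total 0 b with hb | hb
  · have h1 := sgn (-a) (by linarith)
    have h2 := sgn b hb
    rw [odd] at h1
    linarith
  · have h1 := key (-b) (-a) (by linarith) (by linarith)
    rw [odd, odd] at h1
    linarith

theorem contDiff_pder {d : ℕ} (j : Fin d) {f : Euc d → ℝ} (hf : ContDiff ℝ (⊤ : ℕ∞) f) :
    ContDiff ℝ (⊤ : ℕ∞) (pder j f) :=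
  (hf.fderiv_right (m := (⊤ : ℕ∞)) (by norm_cast)).clm_apply contDiff_const

theorem contDiff_lap {d : ℕ} {f : Euc d → ℝ} (hf : ContDiff ℝ (⊤ : ℕ∞) f) :
    ContDiff ℝ (⊤ : ℕ∞) (lap f) :=
  ContDiff.sum fun j _ => contDiff_pder j (contDiff_pder j hf)

theorem contDiff_coord {d : ℕ} {u : Euc d → Euc d} (hu : ContDiff ℝ (⊤ : ℕ∞) u) (i : Fin d) :
    ContDiff ℝ (⊤ : ℕ∞) fun y => u y i :=
  contDiff_euclidean.1 hu i

theorem contDiff_vlap {d : ℕ} {u : Euc d → Euc d} (hu : ContDiff ℝ (⊤ : ℕ∞) u) :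
    ContDiff ℝ (⊤ : ℕ∞) (vlap u) :=
  contDiff_euclidean.2 fun i => contDiff_lap (contDiff_coord hu i)

theorem contDiff_grd {d : ℕ} {p : Euc d → ℝ} (hp : ContDiff ℝ (⊤ : ℕ∞) p) :
    ContDiff ℝ (⊤ : ℕ∞) (grd p) :=
  contDiff_euclidean.2 fun i => contDiff_pder i hp

theorem contDiff_conv {d : ℕ} {u v : Euc d → Euc d} (hu : ContDiff ℝ (⊤ : ℕ∞) u)
    (hv : ContDiff ℝ (⊤ : ℕ∞) v) : ContDiff ℝ (⊤ : ℕ∞) (conv u v) :=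
  contDiff_euclidean.2 fun i =>
    show ContDiff ℝ (⊤ : ℕ∞) fun x => ∑ j, u x j * pder j (fun y => v y i) x from
      ContDiff.sum fun j _ => (contDiff_coord hu j).mul (contDiff_pder j (contDiff_coord hv i))

theorem Continuous.integrableOn_of_isBounded {d : ℕ} {Ω : Set (Euc d)}
    (hΩ : Bornology.IsBounded Ω) {f : Euc d → ℝ} (hf : Continuous f) : IntegrableOn f Ω :=
  (hf.continuousOn.integrableOn_compact hΩ.isCompact_closure).mono_set subset_closure

theorem integrableOn_inner_of_isBounded {d : ℕ} {Ω : Set (Euc d)}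
    (hΩ : Bornology.IsBounded Ω) {u v : Euc d → Euc d} (hu : Continuous u) (hv : Continuous v) :
    IntegrableOn (fun x => ⟪u x, v x⟫) Ω :=
  (Continuous.inner (𝕜 := ℝ) hu hv).integrableOn_of_isBounded hΩ

theorem indicator_comp_eventuallyEq_zero {d : ℕ} {Ω : Set (Euc d)} (hΩ : IsOpen Ω)
    {w : Euc d → ℝ} (hw : Continuous w) (hw0 : ∀ x ∈ frontier Ω, w x = 0) {φ : ℝ → ℝ}
    (hφ0 : φ =ᶠ[𝓝 0] 0) {x : Euc d} (hx : x ∉ Ω) :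
    (Ω.indicator fun x => φ (w x)) =ᶠ[𝓝 x] fun _ => 0 := by
  by_cases hx' : x ∈ closure Ω
  · have hwx : w x = 0 := hw0 x (by rw [hΩ.frontier_eq]; exact ⟨hx', hx⟩)
    have ht : Tendsto w (𝓝 x) (𝓝 0) := hwx ▸ hw.tendsto x
    filter_upwards [ht.eventually hφ0] with y hy
    by_cases hyΩ : y ∈ Ω
    · simpa [hyΩ] using hy
    · simp [hyΩ]
  · filter_upwards [isClosed_closure.isOpen_compl.mem_nhds hx'] with y hy
    exact Set.indicator_of_notMem (fun h => hy (subset_closure h)) _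

/-- A function of `w` that vanishes near the boundary values of `w` extends smoothly by zero. -/
theorem contDiff_indicator_comp {d : ℕ} {Ω : Set (Euc d)} (hΩ : IsOpen Ω) {w : Euc d → ℝ}
    (hw : ContDiff ℝ (⊤ : ℕ∞) w) (hw0 : ∀ x ∈ frontier Ω, w x = 0) {φ : ℝ → ℝ}
    (hφ : ContDiff ℝ (⊤ : ℕ∞) φ) (hφ0 : φ =ᶠ[𝓝 0] 0) :
    ContDiff ℝ (⊤ : ℕ∞) (Ω.indicator fun x => φ (w x)) := by
  rw [contDiff_iff_contDiffAt]
  intro x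
  by_cases hx : x ∈ Ω
  · refine (hφ.comp hw).contDiffAt.congr_of_eventuallyEq ?_
    filter_upwards [hΩ.mem_nhds hx] with y hy
    simp [hy]
  · exact contDiffAt_const.congr_of_eventuallyEq
      (indicator_comp_eventuallyEq_zero hΩ hw.continuous hw0 hφ0 hx)

theorem integral_cutoff_mul_lap_nonpos {d : ℕ} {Ω : Set (Euc d)} (hΩ : IsOpen Ω)
    (hΩb : Bornology.IsBounded Ω) {w : Euc d → ℝ} (hw : ContDiff ℝ (⊤ : ℕ∞) w)
    (hw0 : ∀ x ∈ frontier Ω, w x = 0) (n : ℕ) :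
    ∫ x in Ω, cutoff n (w x) * lap w x ≤ 0 := by
  set f : Euc d → ℝ := Ω.indicator fun x => cutoff n (w x) with hf
  have hfs : ContDiff ℝ (⊤ : ℕ∞) f :=
    contDiff_indicator_comp hΩ hw hw0 (contDiff_cutoff n) (cutoff_eventuallyEq_zero n)
  have hfc : HasCompactSupport f :=
    HasCompactSupport.of_support_subset_isCompact hΩb.isCompact_closure
      (Set.support_indicator_subset.trans subset_closure)
  have hpart : ∀ j, ∫ x, f x * pder j (pder j w) x ≤ 0 := by
    intro j
    have hg := contDiff_pder j hw
    have hfj := contDiff_pder j hfs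
    have hfjc : HasCompactSupport (pder j f) := hfc.fderiv_apply ℝ _
    have h := integral_mul_fderiv_eq_neg_fderiv_mul_of_integrable (μ := volume) (f := f)
      (g := pder j w) (v := EuclideanSpace.single j 1)
      ((hfj.continuous.mul hg.continuous).integrable_of_hasCompactSupport hfjc.mul_right)
      ((hfs.continuous.mul
        (contDiff_pder j hg).continuous).integrable_of_hasCompactSupport hfc.mul_right)
      ((hfs.continuous.mul hg.continuous).integrable_of_hasCompactSupport hfc.mul_right)
      (fun x _ => hfs.differentiable (by simp) x) (fun x _ => hg.differentiable (by simp) x)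
    change ∫ x, f x * fderiv ℝ (pder j w) x (EuclideanSpace.single j 1) ≤ 0
    rw [h, neg_nonpos]
    refine integral_nonneg fun x => ?_
    change 0 ≤ pder j f x * pder j w x
    by_cases hx : x ∈ Ω
    · have he : f =ᶠ[𝓝 x] cutoff n ∘ w := by
        filter_upwards [hΩ.mem_nhds hx] with y hy
        simp [hf, hy]
      have hd : pder j f x = deriv (cutoff n) (w x) * pder j w x := by
        have hc : HasFDerivAt (cutoff n ∘ w) (deriv (cutoff n) (w x) • fderiv ℝ w x) x :=
          (((contDiff_cutoff n).differentiable (by simp)) (w x)).hasDerivAt.comp_hasFDerivAt x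
            ((hw.differentiable (by simp)) x).hasFDerivAt
        rw [pder, he.fderiv_eq, hc.fderiv]
        rfl
      rw [hd, mul_assoc]
      exact mul_nonneg (deriv_cutoff_nonneg n _) (mul_self_nonneg _)
    · have hfx : pder j f x = 0 := by
        rw [pder, (indicator_comp_eventuallyEq_zero hΩ hw.continuous hw0
          (cutoff_eventuallyEq_zero n) hx).fderiv_eq]
        simp
      simp [hfx]
  have hsum : ∫ x in Ω, cutoff n (w x) * lap w x = ∑ j, ∫ x, f x * pder j (pder j w) x := by
    have hint : ∀ j ∈ Finset.univ, Integrable fun x => f x * pder j (pder j w) x := fun j _ =>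
      (hfs.continuous.mul
        (contDiff_pder j (contDiff_pder j hw)).continuous).integrable_of_hasCompactSupport
          hfc.mul_right
    rw [← integral_finsetSum _ hint, ← integral_indicator hΩ.measurableSet]
    refine integral_congr_ae (.of_forall fun x => ?_)
    by_cases hx : x ∈ Ω <;> simp [hf, hx, lap, Finset.mul_sum]
  rw [hsum]
  exact Finset.sum_nonpos fun j _ => hpart j

theorem integral_mul_lap_nonpos {d : ℕ} {Ω : Set (Euc d)} (hΩ : IsOpen Ω)
    (hΩb : Bornology.IsBounded Ω) {w : Euc d → ℝ} (hw : ContDiff ℝ (⊤ : ℕ∞) w)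
    (hw0 : ∀ x ∈ frontier Ω, w x = 0) :
    ∫ x in Ω, w x * lap w x ≤ 0 := by
  have hl := (contDiff_lap hw).continuous
  refine le_of_tendsto (tendsto_integral_of_dominated_convergence (fun x => |w x * lap w x|)
    (F := fun n x => cutoff n (w x) * lap w x) (fun n => ?_) ?_ (fun n => ?_) ?_)
    (.of_forall (integral_cutoff_mul_lap_nonpos hΩ hΩb hw hw0))
  · exact (((contDiff_cutoff n).continuous.comp hw.continuous).mul hl).aestronglyMeasurable
  · exact (hw.continuous.mul hl).abs.integrableOn_of_isBounded hΩb
  · refine .of_forall fun x => ?_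
    rw [norm_eq_abs, abs_mul, abs_mul]
    exact mul_le_mul_of_nonneg_right (abs_cutoff_le n _) (abs_nonneg _)
  · exact .of_forall fun x => (tendsto_cutoff (w x)).mul_const _

theorem integral_inner_vlap_nonpos {d : ℕ} {Ω : Set (Euc d)} (hΩ : IsOpen Ω)
    (hΩb : Bornology.IsBounded Ω) {u : Euc d → Euc d} (hu : ContDiff ℝ (⊤ : ℕ∞) u)
    (hu0 : ∀ x ∈ frontier Ω, u x = 0) :
    ∫ x in Ω, ⟪vlap u x, u x⟫ ≤ 0 := by
  have he : ∀ x, ⟪vlap u x, u x⟫ = ∑ i, u x i * lap (fun y => u y i) x := by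
    intro x
    simp [PiLp.inner_apply, vlap]
  simp_rw [he]
  rw [integral_finsetSum]
  · exact Finset.sum_nonpos fun i _ => integral_mul_lap_nonpos hΩ hΩb (contDiff_coord hu i)
      fun x hx => by simp [hu0 x hx]
  · exact fun i _ => ((contDiff_coord hu i).continuous.mul
      (contDiff_lap (contDiff_coord hu i)).continuous).integrableOn_of_isBounded hΩb

/-- One step of the unforced scheme does not increase the modified energy. -/
theorem PDRLM1.energy_le {d : ℕ} {Ω : Set (Euc d)} (hΩ : IsOpen Ω)
    (hΩb : Bornology.IsBounded Ω) {ν τ θ : ℝ} (hν : 0 ≤ ν) (hτ : 0 < τ)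
    {u uh u' nrm : Euc d → Euc d} {p p' : Euc d → ℝ} {Q Q' : ℝ}
    (hu : ContDiff ℝ (⊤ : ℕ∞) u) (huh : ContDiff ℝ (⊤ : ℕ∞) uh) (hp : ContDiff ℝ (⊤ : ℕ∞) p)
    (h : PDRLM1 Ω ν τ θ (fun _ => 0) u p Q uh u' p' Q' nrm) :
    Ke Ω τ u' p' + θ * Q' ^ 2 ≤ Ke Ω τ u p + θ * Q ^ 2 := by
  obtain ⟨h1, h0, -, -, -, hE⟩ := h
  have hcd : Continuous fun x => (1/τ) • (uh x - u x) :=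
    (huh.continuous.sub hu.continuous).const_smul (1/τ)
  have hi1 := integrableOn_inner_of_isBounded hΩb hcd huh.continuous
  have hi2 := integrableOn_inner_of_isBounded hΩb (contDiff_conv hu hu).continuous huh.continuous
  have hi3 := integrableOn_inner_of_isBounded hΩb (contDiff_grd hp).continuous huh.continuous
  have hi12 : IntegrableOn
      (fun x => ⟪(1/τ) • (uh x - u x), uh x⟫ + Q' * ⟪conv u u x, uh x⟫) Ω :=
    hi1.add (hi2.const_mul Q')
  have hR : ipL2 Ω (fun x => (1/τ) • (uh x - u x)) uh + Q' * triB Ω u u uh + ipGrad Ω p uh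
      = ν * ∫ x in Ω, ⟪vlap uh x, uh x⟫ := by
    unfold ipL2 triB ipGrad
    rw [← integral_const_mul, ← integral_const_mul, ← integral_add hi1 (hi2.const_mul Q'),
      ← integral_add hi12 hi3]
    refine setIntegral_congr_fun hΩ.measurableSet fun x hx => ?_
    have hx1 := congrArg (fun z => ⟪z, uh x⟫) (sub_eq_zero.1 (h1 x hx))
    simp only [inner_add_left, real_inner_smul_left] at hx1 ⊢
    exact hx1
  have hD := mul_nonpos_of_nonneg_of_nonpos hν (integral_inner_vlap_nonpos hΩ hΩb huh h0)
  have hQ : (Ke Ω τ u' p' - Ke Ω τ u p) / τ + θ * (Q' ^ 2 - Q ^ 2) / τ ≤ 0 :=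
    (hE.trans hR).trans_le hD
  rw [← add_div, div_le_iff₀ hτ] at hQ
  linarith

end

/-- uniform bounds on the Lagrange multipliers and velocities of
the P-DRLM1 scheme with `f = 0`:
`Qⁿ ≤ C₀ = √(1 + (‖u⁰‖² + τ²‖∇p⁰‖²)/(2θ))` and
`‖uⁿ‖ ≤ M̃ = √(‖u⁰‖² + τ²‖∇p⁰‖² + 2θ)` for every `n = 0,…,N`, with `C₀ ≥ 1`,
for every time step `τ > 0`. -/
theorem pdrlm1_multiplier_and_velocity_uniform_bounds
    {d : ℕ} (hd : d = 2 ∨ d = 3)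
    (Ω : Set (Euc d)) (hΩo : IsOpen Ω) (hΩb : Bornology.IsBounded Ω) (hΩne : Ω.Nonempty)
    (ν : ℝ) (hν : ν ∈ Set.Ioo (0:ℝ) 1)
    (T : ℝ) (hT : 0 < T) (N : ℕ) (hN : 0 < N) (τ : ℝ) (hτ : τ = T / N) (hτpos : 0 < τ)
    (θ : ℝ) (hθ : 0 < θ)
    (U Uh : ℕ → Euc d → Euc d) (P : ℕ → Euc d → ℝ) (Q : ℕ → ℝ) (hQ0 : Q 0 = 1)
    (hQpos : ∀ n, 0 < Q n)
    (nrm : Euc d → Euc d)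
    -- smoothness of the discrete fields
    (hsU : ∀ n, ContDiff ℝ (⊤ : ℕ∞) (U n)) (hsUh : ∀ n, ContDiff ℝ (⊤ : ℕ∞) (Uh n))
    (hsP : ∀ n, ContDiff ℝ (⊤ : ℕ∞) (P n))
    -- the P-DRLM1 scheme in the absence of the external force
    (hscheme : ∀ n < N, PDRLM1 Ω ν τ θ (fun _ => (0 : Euc d))
      (U n) (P n) (Q n) (Uh (n+1)) (U (n+1)) (P (n+1)) (Q (n+1)) nrm) :
    1 ≤ Real.sqrt (1 + (nsq Ω (U 0) + τ^2 * gnsq Ω (P 0)) / (2*θ))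
    ∧ ∀ n ≤ N,
        Q n ≤ Real.sqrt (1 + (nsq Ω (U 0) + τ^2 * gnsq Ω (P 0)) / (2*θ))
        ∧ Real.sqrt (nsq Ω (U n))
            ≤ Real.sqrt (nsq Ω (U 0) + τ^2 * gnsq Ω (P 0) + 2*θ) := by
  have hg : ∀ n, 0 ≤ τ ^ 2 * gnsq Ω (P n) := fun n =>
    mul_nonneg (sq_nonneg τ) (integral_nonneg fun x => sq_nonneg _)
  have hn : ∀ n, 0 ≤ nsq Ω (U n) := fun n => integral_nonneg fun x => sq_nonneg _
  have hE : ∀ n ≤ N, Ke Ω τ (U n) (P n) + θ * Q n ^ 2 ≤ Ke Ω τ (U 0) (P 0) + θ := by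
    intro n
    induction n with
    | zero => simp [hQ0]
    | succ k ih =>
      intro hk
      exact ((hscheme k hk).energy_le hΩo hΩb hν.1.le hτpos (hsU k) (hsUh (k + 1))
        (hsP k)).trans (ih (Nat.le_of_succ_le hk))
  refine ⟨?_, fun n hnN => ?_⟩
  · rw [Real.one_le_sqrt]
    have := div_nonneg (add_nonneg (hn 0) (hg 0)) (by positivity : (0 : ℝ) ≤ 2 * θ)
    linarith
  · have h := hE n hnN
    simp only [Ke] at h
    constructor
    · apply Real.le_sqrt_of_sq_le
      rw [← sub_le_iff_le_add', le_div_iff₀ (by positivity)]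
      linarith [hn n, hg n]
    · apply Real.sqrt_le_sqrt
      have := mul_nonneg hθ.le (sq_nonneg (Q n))
      linarith [hg n]
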